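/- Let f : ℝⁿ × ℝ^d → ℝⁿ be C¹, and let Λ : ℝ → ℝ^d be C¹ and exponentially bi-asymptotically constant with decay coefficient ρ > 0, with limits λ^± at ±∞. Suppose e⁺ ∈ ℝⁿ satisfies f(e⁺, λ⁺) = 0 and every complex root of the characteristic polynomial of A := D_x f(e⁺, λ⁺) has negative real part. Then for every r > 0 and α ∈ (0, ρ]: every complex root of the characteristic polynomial of the Fréchet derivative of F_{r,α} at (e⁺, 1) (within ℝⁿ × [−1,1]) has negative real part, and −α is such a root; moreover, if in addition α·r < −Re(z) for every complex root z of the characteristic polynomial of A, then every complex root of the characteristic polynomial of the derivative at (e⁺,1) other than −α has real part strictly less than −α. -/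

import Mathlib

open Filter Topology

/-- The time compactification map `g_α(τ) = tanh(ατ/2)`. -/
noncomputable def gcomp (α τ : ℝ) : ℝ := Real.tanh (α * τ / 2)

/-- Its inverse `h_α(s) = (1/α)·ln((1+s)/(1-s))`. -/
noncomputable def hcomp (α s : ℝ) : ℝ := (1 / α) * Real.log ((1 + s) / (1 - s))

/-- `Λ : ℝ → ℝ^d` is exponentially bi-asymptotically constant with decay coefficient `ρ`:
both limits `lim_{τ→+∞} Λ'(τ)·e^{ρτ}` and `lim_{τ→-∞} Λ'(τ)·e^{-ρτ}` exist. -/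
def ExpBiAsympConst {d : ℕ} (Λ : ℝ → Fin d → ℝ) (ρ : ℝ) : Prop :=
  (∃ Lp : Fin d → ℝ, Tendsto (fun τ => Real.exp (ρ * τ) • deriv Λ τ) atTop (𝓝 Lp)) ∧
  (∃ Lm : Fin d → ℝ, Tendsto (fun τ => Real.exp (-ρ * τ) • deriv Λ τ) atBot (𝓝 Lm))

/-- The compactified input `Λ_α : [-1,1] → ℝ^d`, equal to `Λ ∘ h_α` on `(-1,1)` and to the
future/past limits `lp`, `lm` at `s = 1`, `s = -1` respectively. -/
noncomputable def compInput {d : ℕ} (Λ : ℝ → Fin d → ℝ) (lp lm : Fin d → ℝ)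
    (α s : ℝ) : Fin d → ℝ :=
  if s = 1 then lp else if s = -1 then lm else Λ (hcomp α s)

/-- The compactified vector field `F_{r,α}(x,s) = (f(x,Λ_α(s))/r, α(1-s²)/2)` on `ℝⁿ × [-1,1]`. -/
noncomputable def compField {n d : ℕ} (f : (Fin n → ℝ) × (Fin d → ℝ) → Fin n → ℝ)
    (Λ : ℝ → Fin d → ℝ) (lp lm : Fin d → ℝ) (r α : ℝ) :
    (Fin n → ℝ) × ℝ → (Fin n → ℝ) × ℝ :=
  fun p => (r⁻¹ • f (p.1, compInput Λ lp lm α p.2), α * (1 - p.2 ^ 2) / 2)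

/-- The extended phase space `ℝⁿ × [-1,1]`. -/
def compDomain (n : ℕ) : Set ((Fin n → ℝ) × ℝ) := Set.univ ×ˢ Set.Icc (-1) 1

/-- The multiset of complex roots (with multiplicity) of a real polynomial. -/
noncomputable def complexRoots (p : Polynomial ℝ) : Multiset ℂ :=
  (p.map (algebraMap ℝ ℂ)).roots

/-
On `ℝⁿ × [-1,1]` the second component of `F_{r,α}` does not depend on `x`, so its derivative at
`(e⁺, 1)` is block upper triangular, with diagonal blocks `A / r` and `-α`; its spectrum is
therefore that of `A / r` together with `-α`. The analytic point is that the off-diagonal block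
exists, that is, that `Λ_α` is differentiable at `s = 1`. With `τ = h_α(s)`, which tends to `∞` as
`s → 1`, the identity `exp (α τ) = (1 + s) / (1 - s)` gives
`(Λ ∘ h_α)'(s) = 2 / (α (1 + s)²) • exp (α τ) • Λ'(τ)`, and the right side converges because
`exp (ρ τ) • Λ'(τ)` does and `α ≤ ρ`; a continuous function whose derivative converges at an
endpoint is differentiable there.
-/

section Compactification

variable {α s : ℝ}

theorem hasDerivAt_hcomp (hs : s ∈ Set.Ioo (-1) 1) :
    HasDerivAt (hcomp α) (2 / (α * (1 - s ^ 2))) s := by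
  have h_add : 1 + s ≠ 0 := by linarith [hs.1]
  have h_sub : 1 - s ≠ 0 := by linarith [hs.2]
  have h_quot : HasDerivAt (fun t : ℝ => (1 + t) / (1 - t))
      ((1 * (1 - s) - (1 + s) * -1) / (1 - s) ^ 2) s :=
    ((hasDerivAt_id' s).const_add 1).div ((hasDerivAt_id' s).const_sub 1) h_sub
  refine ((h_quot.log (div_ne_zero h_add h_sub)).const_mul (1 / α)).congr_deriv ?_
  rw [show 1 - s ^ 2 = (1 + s) * (1 - s) by ring]
  field_simp
  ring

theorem exp_mul_hcomp (hα : α ≠ 0) (hs : s ∈ Set.Ioo (-1) 1) :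
    Real.exp (α * hcomp α s) = (1 + s) / (1 - s) := by
  have h_pos : 0 < (1 + s) / (1 - s) := div_pos (by linarith [hs.1]) (by linarith [hs.2])
  rw [hcomp, ← mul_assoc, mul_one_div_cancel hα, one_mul, Real.exp_log h_pos]

theorem tendsto_hcomp_atTop (hα : 0 < α) : Tendsto (hcomp α) (𝓝[<] 1) atTop := by
  have h_num : Tendsto (fun s : ℝ => 1 + s) (𝓝[<] 1) (𝓝 (1 + 1)) :=
    tendsto_nhdsWithin_of_tendsto_nhds ((continuous_const_add 1).tendsto 1)
  have h_den : Tendsto (fun s : ℝ => 1 - s) (𝓝[<] 1) (𝓝[>] 0) := by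
    refine tendsto_nhdsWithin_iff.2 ⟨tendsto_nhdsWithin_of_tendsto_nhds ?_, ?_⟩
    · simpa only [sub_self] using (continuous_sub_left (1 : ℝ)).tendsto 1
    · filter_upwards [self_mem_nhdsWithin] with s hs using sub_pos.2 (Set.mem_Iio.1 hs)
  have h_quot : Tendsto (fun s : ℝ => (1 + s) / (1 - s)) (𝓝[<] 1) atTop :=
    h_num.pos_mul_atTop (by norm_num) h_den.inv_tendsto_nhdsGT_zero
  exact (Real.tendsto_log_atTop.comp h_quot).const_mul_atTop (by positivity)

end Compactification

section CompactifiedInput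

variable {E : Type*} [NormedAddCommGroup E] [NormedSpace ℝ E]

theorem exists_tendsto_exp_smul_of_le {v : ℝ → E} {α ρ : ℝ} {ℓ : E}
    (hv : Tendsto (fun τ => Real.exp (ρ * τ) • v τ) atTop (𝓝 ℓ)) (hαρ : α ≤ ρ) :
    ∃ m, Tendsto (fun τ => Real.exp (α * τ) • v τ) atTop (𝓝 m) := by
  rcases hαρ.eq_or_lt with rfl | hlt
  · exact ⟨ℓ, hv⟩
  · have h_decay : Tendsto (fun τ => Real.exp ((α - ρ) * τ)) atTop (𝓝 0) :=
      Real.tendsto_exp_atBot.comp (tendsto_id.const_mul_atTop_of_neg (sub_neg.2 hlt))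
    refine ⟨(0 : ℝ) • ℓ, (h_decay.smul hv).congr fun τ => ?_⟩
    rw [smul_smul, ← Real.exp_add]
    ring_nf

theorem hasDerivAt_comp_hcomp {Λ : ℝ → E} {α s : ℝ} (hΛ : DifferentiableAt ℝ Λ (hcomp α s))
    (hα : α ≠ 0) (hs : s ∈ Set.Ioo (-1) 1) :
    HasDerivAt (Λ ∘ hcomp α)
      ((2 / (α * (1 + s) ^ 2)) • Real.exp (α * hcomp α s) • deriv Λ (hcomp α s)) s := by
  refine (hΛ.hasDerivAt.scomp s (hasDerivAt_hcomp hs)).congr_deriv ?_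
  have h_add : 1 + s ≠ 0 := by linarith [hs.1]
  have h_sub : 1 - s ≠ 0 := by linarith [hs.2]
  rw [exp_mul_hcomp hα hs, smul_smul, show 1 - s ^ 2 = (1 + s) * (1 - s) by ring]
  congr 1
  field_simp

theorem tendsto_deriv_comp_hcomp {Λ : ℝ → E} {α : ℝ} {ℓ : E} (hΛ : Differentiable ℝ Λ)
    (hα : 0 < α) (hℓ : Tendsto (fun τ => Real.exp (α * τ) • deriv Λ τ) atTop (𝓝 ℓ)) :
    Tendsto (deriv (Λ ∘ hcomp α)) (𝓝[<] 1) (𝓝 ((2 * α)⁻¹ • ℓ)) := by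
  have h_cont : ContinuousAt (fun s : ℝ => 2 / (α * (1 + s) ^ 2)) 1 :=
    continuousAt_const.div (by fun_prop) (by positivity)
  have h_coeff : Tendsto (fun s : ℝ => 2 / (α * (1 + s) ^ 2)) (𝓝[<] 1) (𝓝 (2 * α)⁻¹) := by
    rw [show (2 * α)⁻¹ = 2 / (α * (1 + 1) ^ 2) by field_simp; norm_num]
    exact h_cont.tendsto.mono_left nhdsWithin_le_nhds
  refine (h_coeff.smul (hℓ.comp (tendsto_hcomp_atTop hα))).congr' ?_
  filter_upwards [Ioo_mem_nhdsLT (show (-1 : ℝ) < 1 by norm_num)] with s hs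
  exact (hasDerivAt_comp_hcomp (hΛ _) hα.ne' hs).deriv.symm

variable {d : ℕ} (Λ : ℝ → Fin d → ℝ) (lp lm : Fin d → ℝ) (α : ℝ)

theorem compInput_one : compInput Λ lp lm α 1 = lp :=
  if_pos rfl

theorem eqOn_compInput_comp_hcomp :
    Set.EqOn (compInput Λ lp lm α) (Λ ∘ hcomp α) (Set.Ioo (-1) 1) := fun s hs => by
  simp only [compInput, hs.1.ne', hs.2.ne, if_false, Function.comp_apply]

variable {Λ lp lm α}

theorem hasDerivWithinAt_compInput_one {ℓ : Fin d → ℝ} (hΛ : Differentiable ℝ Λ) (hα : 0 < α)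
    (hlp : Tendsto Λ atTop (𝓝 lp))
    (hℓ : Tendsto (fun τ => Real.exp (α * τ) • deriv Λ τ) atTop (𝓝 ℓ)) :
    HasDerivWithinAt (compInput Λ lp lm α) ((2 * α)⁻¹ • ℓ) (Set.Iic 1) 1 := by
  have h_mem : Set.Ioo (-1 : ℝ) 1 ∈ 𝓝[<] 1 := Ioo_mem_nhdsLT (by norm_num)
  have h_eqOn := eqOn_compInput_comp_hcomp Λ lp lm α
  have h_diff : DifferentiableOn ℝ (compInput Λ lp lm α) (Set.Ioo (-1) 1) :=
    DifferentiableOn.congr (fun s hs =>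
      (hasDerivAt_comp_hcomp (hΛ _) hα.ne' hs).differentiableAt.differentiableWithinAt) h_eqOn
  have h_cont : ContinuousWithinAt (compInput Λ lp lm α) (Set.Ioo (-1) 1) 1 := by
    have h_left : Tendsto (compInput Λ lp lm α) (𝓝[<] 1) (𝓝 lp) :=
      (hlp.comp (tendsto_hcomp_atTop hα)).congr' (h_eqOn.symm.eventuallyEq_of_mem h_mem)
    rw [ContinuousWithinAt, compInput_one]
    exact h_left.mono_left (nhdsWithin_mono _ Set.Ioo_subset_Iio_self)
  have h_deriv := (h_eqOn.deriv isOpen_Ioo).symm.eventuallyEq_of_mem h_mem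
  exact hasDerivWithinAt_Iic_of_tendsto_deriv h_diff h_cont h_mem
    ((tendsto_deriv_comp_hcomp hΛ hα hℓ).congr' h_deriv)

end CompactifiedInput

section Linearization

variable {E F G : Type*} [NormedAddCommGroup E] [NormedSpace ℝ E] [NormedAddCommGroup F]
  [NormedSpace ℝ F] [NormedAddCommGroup G] [NormedSpace ℝ G]

theorem hasFDerivWithinAt_comp_prodMk_curve {f : E × F → G} {g : ℝ → F} {S : Set ℝ} {x₀ : E}
    {t₀ : ℝ} {A : E →L[ℝ] G} {B : F →L[ℝ] G} {v : F} (hf : HasFDerivAt f (A.coprod B) (x₀, g t₀))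
    (hg : HasDerivWithinAt g v S t₀) :
    HasFDerivWithinAt (fun p : E × ℝ => f (p.1, g p.2))
      (A.coprod (ContinuousLinearMap.toSpanSingleton ℝ (B v))) (Set.univ ×ˢ S) (x₀, t₀) := by
  have h_curve : HasFDerivWithinAt (fun p : E × ℝ => (p.1, g p.2))
      ((ContinuousLinearMap.fst ℝ E ℝ).prod ((ContinuousLinearMap.toSpanSingleton ℝ v).comp
        (ContinuousLinearMap.snd ℝ E ℝ))) (Set.univ ×ˢ S) (x₀, t₀) :=
    hasFDerivWithinAt_fst.prodMk <| HasFDerivWithinAt.comp (g := g) (x₀, t₀)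
      hg.hasFDerivWithinAt hasFDerivWithinAt_snd fun _ hp => hp.2
  refine (hf.comp_hasFDerivWithinAt (g := f) (x₀, t₀) h_curve).congr_fderiv ?_
  ext <;> simp

/-- The operator `(x, s) ↦ (T x + s • v, -α s)` on `E × ℝ`, the shape taken by the derivative of a
compactified vector field at a point of the invariant hyperplane `s = 1`. -/
noncomputable def compLinearization (T : E →L[ℝ] E) (v : E) (α : ℝ) : E × ℝ →L[ℝ] E × ℝ :=
  (T.coprod (ContinuousLinearMap.toSpanSingleton ℝ v)).prod
    ((-α) • ContinuousLinearMap.snd ℝ E ℝ)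

theorem hasFDerivWithinAt_compField {n d : ℕ} {f : (Fin n → ℝ) × (Fin d → ℝ) → Fin n → ℝ}
    {Λ : ℝ → Fin d → ℝ} {lp lm v : Fin d → ℝ} {x₀ : Fin n → ℝ} (r : ℝ) {α : ℝ}
    {A : (Fin n → ℝ) →L[ℝ] Fin n → ℝ} {B : (Fin d → ℝ) →L[ℝ] Fin n → ℝ}
    (hf : HasFDerivAt f (A.coprod B) (x₀, lp))
    (hv : HasDerivWithinAt (compInput Λ lp lm α) v (Set.Icc (-1) 1) 1) :
    HasFDerivWithinAt (compField f Λ lp lm r α) (compLinearization (r⁻¹ • A) (r⁻¹ • B v) α)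
      (compDomain n) (x₀, 1) := by
  have h_fst : HasFDerivWithinAt
      (fun p : (Fin n → ℝ) × ℝ => r⁻¹ • f (p.1, compInput Λ lp lm α p.2))
      ((r⁻¹ • A).coprod (ContinuousLinearMap.toSpanSingleton ℝ (r⁻¹ • B v)))
      (compDomain n) (x₀, 1) := by
    rw [← compInput_one Λ lp lm α] at hf
    refine ((hasFDerivWithinAt_comp_prodMk_curve hf hv).const_smul r⁻¹).congr_fderiv ?_
    ext <;> simp
  have h_time : HasDerivAt (fun s : ℝ => α * (1 - s ^ 2) / 2) (-α) 1 :=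
    (((((hasDerivAt_id' (1 : ℝ)).pow 2).const_sub 1).const_mul α).div_const 2).congr_deriv
      (by norm_num; ring)
  have h_snd : HasFDerivWithinAt (fun p : (Fin n → ℝ) × ℝ => α * (1 - p.2 ^ 2) / 2)
      ((-α) • ContinuousLinearMap.snd ℝ (Fin n → ℝ) ℝ) (compDomain n) (x₀, 1) :=
    HasDerivAt.comp_hasFDerivWithinAt (f := Prod.snd) (x₀, (1 : ℝ)) h_time hasFDerivWithinAt_snd
  exact h_fst.prodMk h_snd

end Linearization

section Spectrum

theorem charpoly_coprod_prod_comp_snd {R M₁ M₂ : Type*} [CommRing R] [AddCommGroup M₁]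
    [Module R M₁] [Module.Finite R M₁] [Module.Free R M₁] [AddCommGroup M₂] [Module R M₂]
    [Module.Finite R M₂] [Module.Free R M₂] (A : M₁ →ₗ[R] M₁) (B : M₂ →ₗ[R] M₁)
    (D : M₂ →ₗ[R] M₂) :
    ((A.coprod B).prod (D ∘ₗ LinearMap.snd R M₁ M₂)).charpoly = A.charpoly * D.charpoly := by
  let b₁ := Module.Free.chooseBasis R M₁
  let b₂ := Module.Free.chooseBasis R M₂
  have h_blocks : LinearMap.toMatrix (b₁.prod b₂) (b₁.prod b₂)
      ((A.coprod B).prod (D ∘ₗ LinearMap.snd R M₁ M₂)) =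
      Matrix.fromBlocks (LinearMap.toMatrix b₁ b₁ A) (LinearMap.toMatrix b₂ b₁ B) 0
        (LinearMap.toMatrix b₂ b₂ D) := by
    ext (i | i) (j | j) <;> simp [LinearMap.toMatrix_apply]
  rw [← LinearMap.charpoly_toMatrix _ (b₁.prod b₂), h_blocks, Matrix.charpoly_fromBlocks_zero₂₁,
    LinearMap.charpoly_toMatrix, LinearMap.charpoly_toMatrix]

theorem charpoly_smul_id {R : Type*} [CommRing R] (c : R) :
    (c • LinearMap.id : R →ₗ[R] R).charpoly = Polynomial.X - Polynomial.C c := by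
  rw [← LinearMap.charpoly_toMatrix _ (Module.Basis.singleton Unit R)]
  rw [map_smul, LinearMap.toMatrix_id]
  simp [Matrix.charpoly]

variable {K V : Type*} (L : Type*) [Field K] [AddCommGroup V] [Module K V]
  [FiniteDimensional K V] [Field L] [Algebra K L]

theorem mem_aroots_charpoly_iff_mem_spectrum (T : V →ₗ[K] V) (μ : L) :
    μ ∈ T.charpoly.aroots L ↔ μ ∈ spectrum L (T.baseChange L) := by
  rw [Module.End.mem_spectrum_iff_isRoot_charpoly, LinearMap.charpoly_baseChange,
    Polynomial.aroots_def, Polynomial.mem_roots (T.charpoly_monic.map _).ne_zero]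

theorem mem_aroots_charpoly_smul_iff {c : K} (hc : c ≠ 0) (T : V →ₗ[K] V) (μ : L) :
    μ ∈ (c • T).charpoly.aroots L ↔ (algebraMap K L c)⁻¹ * μ ∈ T.charpoly.aroots L := by
  have hcL : algebraMap K L c ≠ 0 := (map_ne_zero _).2 hc
  have h_smul : (c • T).baseChange L = Units.mk0 _ hcL • T.baseChange L := by
    rw [LinearMap.baseChange_smul, Units.smul_mk0, algebraMap_smul]
  have h_mul : μ = Units.mk0 _ hcL • ((algebraMap K L c)⁻¹ * μ) := by
    rw [Units.smul_mk0, smul_eq_mul, mul_inv_cancel_left₀ hcL]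
  rw [mem_aroots_charpoly_iff_mem_spectrum, mem_aroots_charpoly_iff_mem_spectrum, h_smul]
  nth_rw 1 [h_mul]
  exact spectrum.smul_mem_smul_iff

theorem mem_complexRoots_charpoly_compLinearization {E : Type*} [NormedAddCommGroup E]
    [NormedSpace ℝ E] [FiniteDimensional ℝ E] {r : ℝ} (hr : r ≠ 0) (A : E →L[ℝ] E) (v : E)
    (α : ℝ) (z : ℂ) :
    z ∈ complexRoots (compLinearization (r⁻¹ • A) v α).toLinearMap.charpoly ↔
      r * z ∈ complexRoots A.toLinearMap.charpoly ∨ z = -α := by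
  have h_charpoly : (compLinearization (r⁻¹ • A) v α).toLinearMap.charpoly =
      (r⁻¹ • A.toLinearMap).charpoly * (Polynomial.X - Polynomial.C (-α)) := by
    have h_blocks : (compLinearization (r⁻¹ • A) v α).toLinearMap =
        ((r⁻¹ • A.toLinearMap).coprod (LinearMap.toSpanSingleton ℝ E v)).prod
          (((-α) • LinearMap.id) ∘ₗ LinearMap.snd ℝ E ℝ) := rfl
    rw [h_blocks, charpoly_coprod_prod_comp_snd, charpoly_smul_id]
  have h_ne := mul_ne_zero (r⁻¹ • A.toLinearMap).charpoly_monic.ne_zero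
    (Polynomial.X_sub_C_ne_zero (-α))
  change z ∈ Polynomial.aroots _ ℂ ↔ _ ∈ Polynomial.aroots _ ℂ ∨ _
  rw [h_charpoly, Polynomial.aroots_mul h_ne, Multiset.mem_add, Polynomial.aroots_X_sub_C,
    Multiset.mem_singleton, mem_aroots_charpoly_smul_iff ℂ (inv_ne_zero hr)]
  simp

end Spectrum

theorem exists_hasFDerivWithinAt_compField_mem_complexRoots_iff {n d : ℕ}
    {f : (Fin n → ℝ) × (Fin d → ℝ) → Fin n → ℝ} {Λ : ℝ → Fin d → ℝ} {ρ α r : ℝ}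
    {lp ℓ : Fin d → ℝ} (lm : Fin d → ℝ) {x₀ : Fin n → ℝ} (hf : DifferentiableAt ℝ f (x₀, lp))
    (hΛ : Differentiable ℝ Λ)
    (hℓ : Tendsto (fun τ => Real.exp (ρ * τ) • deriv Λ τ) atTop (𝓝 ℓ))
    (hp : Tendsto Λ atTop (𝓝 lp)) (hr : r ≠ 0) (hα : α ∈ Set.Ioc 0 ρ) :
    ∃ L : ((Fin n → ℝ) × ℝ) →L[ℝ] ((Fin n → ℝ) × ℝ),
      HasFDerivWithinAt (compField f Λ lp lm r α) L (compDomain n) (x₀, 1) ∧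
      ∀ z : ℂ, z ∈ complexRoots L.toLinearMap.charpoly ↔
        r * z ∈ complexRoots (fderiv ℝ (fun x => f (x, lp)) x₀).toLinearMap.charpoly ∨
          z = -α := by
  obtain ⟨m, hm⟩ := exists_tendsto_exp_smul_of_le hℓ hα.2
  have h_input := (hasDerivWithinAt_compInput_one (lm := lm) hΛ hα.1 hp hm).mono
    (Set.Icc_subset_Iic_self (a := -1))
  have h_partial : fderiv ℝ (fun x => f (x, lp)) x₀ =
      (fderiv ℝ f (x₀, lp)).comp (ContinuousLinearMap.inl ℝ _ _) :=
    (hf.hasFDerivAt.comp x₀ (hasFDerivAt_prodMk_left x₀ lp)).fderiv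
  have h_total : HasFDerivAt f ((fderiv ℝ (fun x => f (x, lp)) x₀).coprod
      ((fderiv ℝ f (x₀, lp)).comp (ContinuousLinearMap.inr ℝ _ _))) (x₀, lp) := by
    rw [h_partial]
    exact hf.hasFDerivAt.congr_fderiv (by ext <;> simp)
  exact ⟨_, hasFDerivWithinAt_compField r h_total h_input,
    mem_complexRoots_charpoly_compLinearization hr _ _ α⟩

theorem stmt8_general {n d : ℕ} (f : (Fin n → ℝ) × (Fin d → ℝ) → Fin n → ℝ)
    (Λ : ℝ → Fin d → ℝ) (ρ : ℝ) (hΛ : Differentiable ℝ Λ) (ℓ : Fin d → ℝ)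
    (hℓ : Tendsto (fun τ => Real.exp (ρ * τ) • deriv Λ τ) atTop (𝓝 ℓ))
    (lp lm : Fin d → ℝ)
    (hp : Tendsto Λ atTop (𝓝 lp)) (_hm : Tendsto Λ atBot (𝓝 lm))
    (x₀ : Fin n → ℝ) (hf : DifferentiableAt ℝ f (x₀, lp))
    (hsink : ∀ z ∈ complexRoots
        (fderiv ℝ (fun x => f (x, lp)) x₀).toLinearMap.charpoly, z.re < 0) :
    ∀ r > (0 : ℝ), ∀ α ∈ Set.Ioc (0 : ℝ) ρ,
      ∃ L : ((Fin n → ℝ) × ℝ) →L[ℝ] ((Fin n → ℝ) × ℝ),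
        HasFDerivWithinAt (compField f Λ lp lm r α) L (compDomain n) (x₀, 1) ∧
        (∀ z ∈ complexRoots L.toLinearMap.charpoly, z.re < 0) ∧
        (-(α : ℂ) ∈ complexRoots L.toLinearMap.charpoly) ∧
        ((∀ z ∈ complexRoots
            (fderiv ℝ (fun x => f (x, lp)) x₀).toLinearMap.charpoly, α * r < -z.re) →
          ∀ z ∈ complexRoots L.toLinearMap.charpoly, z ≠ -(α : ℂ) → z.re < -α) := by
  intro r hr α hα
  obtain ⟨L, hL, h_roots⟩ :=
    exists_hasFDerivWithinAt_compField_mem_complexRoots_iff lm hf hΛ hℓ hp hr.ne' hα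
  refine ⟨L, hL, fun z hz => ?_, (h_roots _).2 (Or.inr rfl), fun h_gap z hz hne => ?_⟩
  · rcases (h_roots z).1 hz with hz | rfl
    · have h_re := hsink _ hz
      rw [Complex.re_ofReal_mul] at h_re
      exact (pos_iff_neg_of_mul_neg h_re).1 hr
    · simpa using hα.1
  · have h_re := h_gap _ (((h_roots z).1 hz).resolve_right hne)
    rw [Complex.re_ofReal_mul, mul_comm α, ← mul_neg] at h_re
    linarith [lt_of_mul_lt_mul_left h_re hr.le]

/-- If `e⁺` is a hyperbolic sink of the future limit system (all complex
eigenvalues of `A = D_x f(e⁺,λ⁺)` have negative real part), then for every `r > 0` and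
`α ∈ (0,ρ]`: all complex eigenvalues of the derivative of `F_{r,α}` at `(e⁺,1)` have
negative real part, `-α` is such an eigenvalue, and if moreover `α·r < -Re z` for every
eigenvalue `z` of `A`, then every eigenvalue other than `-α` has real part `< -α`. -/
theorem stmt8 {n d : ℕ} (f : (Fin n → ℝ) × (Fin d → ℝ) → Fin n → ℝ)
    (hf : ContDiff ℝ 1 f)
    (Λ : ℝ → Fin d → ℝ) (ρ : ℝ) (hρ : 0 < ρ)
    (hΛ : ContDiff ℝ 1 Λ) (hbac : ExpBiAsympConst Λ ρ)
    (lp lm : Fin d → ℝ)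
    (hp : Tendsto Λ atTop (𝓝 lp)) (hm : Tendsto Λ atBot (𝓝 lm))
    (ep : Fin n → ℝ) (heq : f (ep, lp) = 0)
    (hsink : ∀ z ∈ complexRoots
        (fderiv ℝ (fun x => f (x, lp)) ep).toLinearMap.charpoly, z.re < 0) :
    ∀ r > (0 : ℝ), ∀ α ∈ Set.Ioc (0 : ℝ) ρ,
      ∃ L : ((Fin n → ℝ) × ℝ) →L[ℝ] ((Fin n → ℝ) × ℝ),
        HasFDerivWithinAt (compField f Λ lp lm r α) L (compDomain n) (ep, 1) ∧
        (∀ z ∈ complexRoots L.toLinearMap.charpoly, z.re < 0) ∧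
        (-(α : ℂ) ∈ complexRoots L.toLinearMap.charpoly) ∧
        ((∀ z ∈ complexRoots
            (fderiv ℝ (fun x => f (x, lp)) ep).toLinearMap.charpoly, α * r < -z.re) →
          ∀ z ∈ complexRoots L.toLinearMap.charpoly, z ≠ -(α : ℂ) → z.re < -α) := by
  obtain ⟨⟨ℓ, hℓ⟩, -⟩ := hbac
  exact stmt8_general f Λ ρ (hΛ.differentiable one_ne_zero) ℓ hℓ lp lm hp hm ep
    (hf.differentiable one_ne_zero _) hsink
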